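/- arXiv:1705.07737 — 2 statements merged into one kernel-verified Lean document; each statement's English description precedes it below -/
import Mathlib

section
/- Let Q be the quadratic form on ℝ³ (functions Fin 3 → ℝ) given by Q x = −(x 0)^2 − (x 1)^2 + (x 2)^2. Then there exists an ℝ-algebra homomorphism from CliffordAlgebra Q to Matrix (Fin 2) (Fin 2) (ℂ × ℂ) sending the images ι(b k) of the standard basis vectors to e₁, e₂, e₃ respectively. -/
/-- The bicomplex unit `i := (Complex.I, Complex.I)`. -/
def bcI : ℂ × ℂ := (Complex.I, Complex.I)

/-- The bicomplex unit `j := (Complex.I, -Complex.I)`. -/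
def bcJ : ℂ × ℂ := (Complex.I, -Complex.I)

/-- Minkowski paravector generator `e₁ := !![i, 0; 0, -i]`. -/
def mink1 : Matrix (Fin 2) (Fin 2) (ℂ × ℂ) := !![bcI, 0; 0, -bcI]

/-- Minkowski paravector generator `e₂ := !![0, i; i, 0]`. -/
def mink2 : Matrix (Fin 2) (Fin 2) (ℂ × ℂ) := !![0, bcI; bcI, 0]

/-- Minkowski paravector generator `e₃ := !![0, j; -j, 0]`. -/
def mink3 : Matrix (Fin 2) (Fin 2) (ℂ × ℂ) := !![0, bcJ; -bcJ, 0]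

/-!
When the `e k` anticommute pairwise, the cross terms of `(∑ k, x k • e k) ^ 2` cancel in pairs, so
the square is the scalar `∑ k, w k * x k ^ 2` as soon as each `e k ^ 2` is the scalar `w k`. The
universal property of the Clifford algebra then extends `x ↦ ∑ k, x k • e k` to an algebra
homomorphism. For the three matrices at hand both conditions use only that `i` and `j` are commuting
square roots of `-1`.
-/

theorem sum_mul_self_of_pairwise_anticommute {n A : Type*} [NonUnitalNonAssocSemiring A]
    (s : Finset n) {e : n → A}
    (he : (s : Set n).Pairwise fun k l => e k * e l + e l * e k = 0) :
    (∑ k ∈ s, e k) * ∑ k ∈ s, e k = ∑ k ∈ s, e k * e k := by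
  induction s using Finset.cons_induction with
  | empty => simp
  | cons k s hk ih =>
    rw [Finset.coe_cons] at he
    have cross_terms : e k * ∑ l ∈ s, e l + (∑ l ∈ s, e l) * e k = 0 := by
      rw [Finset.mul_sum, Finset.sum_mul, ← Finset.sum_add_distrib]
      exact Finset.sum_eq_zero fun l hl =>
        he (Set.mem_insert k s) (Set.mem_insert_of_mem k hl) (ne_of_mem_of_not_mem hl hk).symm
    calc (∑ l ∈ s.cons k hk, e l) * ∑ l ∈ s.cons k hk, e l
        = e k * e k + (e k * ∑ l ∈ s, e l + (∑ l ∈ s, e l) * e k)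
            + (∑ l ∈ s, e l) * ∑ l ∈ s, e l := by
          rw [Finset.sum_cons, add_mul, mul_add, mul_add]
          abel
      _ = ∑ l ∈ s.cons k hk, e l * e l := by
          rw [cross_terms, add_zero, ih (he.mono (Set.subset_insert k s)), Finset.sum_cons]

section DiagonalForm

variable {n R A : Type*} [Fintype n]

theorem linearCombination_mul_self_of_pairwise_anticommute
    [CommSemiring R] [Semiring A] [Algebra R A]
    {w : n → R} {e : n → A} (he_sq : ∀ k, e k * e k = algebraMap R A (w k))
    (he_anti : Pairwise fun k l => e k * e l + e l * e k = 0) (x : n → R) :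
    Fintype.linearCombination R e x * Fintype.linearCombination R e x =
      algebraMap R A (QuadraticMap.weightedSumSquares R w x) := by
  have smul_anti :
      Pairwise fun k l => (x k • e k) * (x l • e l) + (x l • e l) * (x k • e k) = 0 := by
    intro k l hkl
    simp only [smul_mul_smul_comm, mul_comm (x l), ← smul_add, he_anti hkl, smul_zero]
  rw [Fintype.linearCombination_apply,
    sum_mul_self_of_pairwise_anticommute _ (smul_anti.set_pairwise _),
    QuadraticMap.weightedSumSquares_apply, map_sum]
  refine Finset.sum_congr rfl fun k _ => ?_
  rw [smul_mul_smul_comm, he_sq, Algebra.smul_def, ← map_mul, smul_eq_mul, mul_comm]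

variable [CommRing R] [Semiring A] [Algebra R A]

/-- The homomorphism out of the Clifford algebra of the diagonal form `∑ k, w k * x k ^ 2`
determined by pairwise anticommuting elements `e k` whose squares are the scalars `w k`. -/
def weightedSumSquaresLift {w : n → R} {e : n → A}
    (he_sq : ∀ k, e k * e k = algebraMap R A (w k))
    (he_anti : Pairwise fun k l => e k * e l + e l * e k = 0) :
    CliffordAlgebra (QuadraticMap.weightedSumSquares R w) →ₐ[R] A :=
  CliffordAlgebra.lift _
    ⟨Fintype.linearCombination R e,
      linearCombination_mul_self_of_pairwise_anticommute he_sq he_anti⟩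

theorem weightedSumSquaresLift_ι_single [DecidableEq n] {w : n → R} {e : n → A}
    (he_sq : ∀ k, e k * e k = algebraMap R A (w k))
    (he_anti : Pairwise fun k l => e k * e l + e l * e k = 0) (k : n) :
    weightedSumSquaresLift he_sq he_anti (CliffordAlgebra.ι _ (Pi.single k 1)) = e k := by
  rw [weightedSumSquaresLift, CliffordAlgebra.lift_ι_apply,
    Fintype.linearCombination_apply_single, one_smul]

end DiagonalForm

section Generators

variable {S : Type*} [Ring S]

/-- The matrices `e₁, e₂, e₃` of the paravector model of Minkowski space, indexed from `0`, with
arbitrary elements of a ring in place of the bicomplex units `i` and `j`. -/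
def paravectorGenerator (i j : S) : Fin 3 → Matrix (Fin 2) (Fin 2) S :=
  ![!![i, 0; 0, -i], !![0, i; i, 0], !![0, j; -j, 0]]

theorem paravectorGenerator_mul_self {R : Type*} [CommRing R] [Algebra R S] {i j : S}
    (hi : i * i = -1) (hj : j * j = -1) (k : Fin 3) :
    paravectorGenerator i j k * paravectorGenerator i j k =
      algebraMap R (Matrix (Fin 2) (Fin 2) S) (![-1, -1, 1] k) := by
  fin_cases k <;> simp [paravectorGenerator, hi, hj, Matrix.one_fin_two]

theorem paravectorGenerator_pairwise_anticommute {i j : S} (hij : Commute i j) :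
    Pairwise fun k l => paravectorGenerator i j k * paravectorGenerator i j l +
      paravectorGenerator i j l * paravectorGenerator i j k = 0 := by
  intro k l hkl
  fin_cases k <;> fin_cases l <;>
    simp [paravectorGenerator, hij.eq, ← Matrix.ext_iff, Fin.forall_fin_two] at hkl ⊢

end Generators

theorem minkowski_cliffordHom_general {R S : Type*} [CommRing R] [Ring S] [Algebra R S] {i j : S}
    (hij : Commute i j) (hi : i * i = -1) (hj : j * j = -1)
    (Q : QuadraticForm R (Fin 3 → R))
    (hQ : ∀ x, Q x = -(x 0) ^ 2 - (x 1) ^ 2 + (x 2) ^ 2) :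
    ∃ f : CliffordAlgebra Q →ₐ[R] Matrix (Fin 2) (Fin 2) S,
      f (CliffordAlgebra.ι Q (Pi.single 0 1)) = !![i, 0; 0, -i] ∧
      f (CliffordAlgebra.ι Q (Pi.single 1 1)) = !![0, i; i, 0] ∧
      f (CliffordAlgebra.ι Q (Pi.single 2 1)) = !![0, j; -j, 0] := by
  obtain rfl : Q = QuadraticMap.weightedSumSquares R (![-1, -1, 1] : Fin 3 → R) := by
    ext x
    simp [hQ, Fin.sum_univ_three, sq, sub_eq_add_neg]
  have he_sq := paravectorGenerator_mul_self (R := R) hi hj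
  have he_anti := paravectorGenerator_pairwise_anticommute hij
  exact ⟨weightedSumSquaresLift he_sq he_anti, weightedSumSquaresLift_ι_single he_sq he_anti 0,
    weightedSumSquaresLift_ι_single he_sq he_anti 1,
    weightedSumSquaresLift_ι_single he_sq he_anti 2⟩

theorem bcI_mul_self : bcI * bcI = -1 := by
  simp [bcI, Prod.ext_iff]

theorem bcJ_mul_self : bcJ * bcJ = -1 := by
  simp [bcJ, Prod.ext_iff]

/-- for the quadratic form `Q x = -(x 0)² - (x 1)² + (x 2)²` on
`ℝ³` there is an ℝ-algebra homomorphism `CliffordAlgebra Q →ₐ[ℝ]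
Matrix (Fin 2) (Fin 2) (ℂ × ℂ)` sending the images `ι (Pi.single k 1)` of the
standard basis vectors to `e₁, e₂, e₃` respectively. -/
theorem minkowski_cliffordHom
    (Q : QuadraticForm ℝ (Fin 3 → ℝ))
    (hQ : ∀ x, Q x = -(x 0) ^ 2 - (x 1) ^ 2 + (x 2) ^ 2) :
    ∃ f : CliffordAlgebra Q →ₐ[ℝ] Matrix (Fin 2) (Fin 2) (ℂ × ℂ),
      f (CliffordAlgebra.ι Q (Pi.single 0 1)) = mink1 ∧
      f (CliffordAlgebra.ι Q (Pi.single 1 1)) = mink2 ∧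
      f (CliffordAlgebra.ι Q (Pi.single 2 1)) = mink3 :=
  minkowski_cliffordHom_general (Commute.all bcI bcJ) bcI_mul_self bcJ_mul_self Q hQ
end

section
/- With paravectors F : Fin 6 → Matrix (Fin 2) (Fin 2) (Matrix (Fin 2) (Fin 2) (ℂ × ℂ)) given by F 0 = 1, F μ = E μ (μ = 1, …, 5), conjugates F̄ 0 = 1, F̄ μ = −(E μ), and spin angular momentum s μ ν := (F μ * F̄ ν − F ν * F̄ μ) / 4, the so(4,2)-type commutation relations hold for all μ, ν, ρ, σ : Fin 6: [s μ ν, s ρ σ] = (g ν ρ) • s μ σ − (g μ ρ) • s ν σ + (g μ σ) • s ν ρ − (g ν σ) • s μ ρ, where [X, Y] = X*Y − Y*X and g = diag(1, 1, 1, −1, 1, −1). -/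
/-- Ambient-space generator `E 1 := !![e₁, 0; 0, -e₁]`. -/
def ads1 : Matrix (Fin 2) (Fin 2) (Matrix (Fin 2) (Fin 2) (ℂ × ℂ)) :=
  !![mink1, 0; 0, -mink1]

/-- Ambient-space generator `E 2 := !![e₂, 0; 0, -e₂]`. -/
def ads2 : Matrix (Fin 2) (Fin 2) (Matrix (Fin 2) (Fin 2) (ℂ × ℂ)) :=
  !![mink2, 0; 0, -mink2]

/-- Ambient-space generator `E 3 := !![e₃, 0; 0, -e₃]`. -/
def ads3 : Matrix (Fin 2) (Fin 2) (Matrix (Fin 2) (Fin 2) (ℂ × ℂ)) :=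
  !![mink3, 0; 0, -mink3]

/-- Ambient-space generator `E 4 := !![0, i•1; i•1, 0]`. -/
def ads4 : Matrix (Fin 2) (Fin 2) (Matrix (Fin 2) (Fin 2) (ℂ × ℂ)) :=
  !![0, bcI • 1; bcI • 1, 0]

/-- Ambient-space generator `E 5 := !![0, j•1; -(j•1), 0]`. -/
def ads5 : Matrix (Fin 2) (Fin 2) (Matrix (Fin 2) (Fin 2) (ℂ × ℂ)) :=
  !![0, bcJ • 1; -(bcJ • 1), 0]

/-- The paravector `F μ`, with `F 0 = 1`, `F μ = E μ` for `μ = 1, …, 5`. -/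
def adsPara : Fin 6 → Matrix (Fin 2) (Fin 2) (Matrix (Fin 2) (Fin 2) (ℂ × ℂ)) :=
  ![1, ads1, ads2, ads3, ads4, ads5]

/-- The conjugate paravector `F̄ μ`, with `F̄ 0 = 1`, `F̄ μ = -(E μ)`. -/
def adsParaBar : Fin 6 → Matrix (Fin 2) (Fin 2) (Matrix (Fin 2) (Fin 2) (ℂ × ℂ)) :=
  ![1, -ads1, -ads2, -ads3, -ads4, -ads5]

/-- The ambient metric `g = diag(1, 1, 1, -1, 1, -1)`. -/
def adsMetric : Fin 6 → Fin 6 → ℝ :=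
  fun μ ν => if μ = ν then ![1, 1, 1, -1, 1, -1] μ else 0


/-- The ambient spin angular momentum `s μ ν := (F μ * F̄ ν - F ν * F̄ μ) / 4`. -/
noncomputable def adsSpin (μ ν : Fin 6) :
    Matrix (Fin 2) (Fin 2) (Matrix (Fin 2) (Fin 2) (ℂ × ℂ)) :=
  (1 / 4 : ℝ) • (adsPara μ * adsParaBar ν - adsPara ν * adsParaBar μ)

/-!
Conformal compactification sends generators with Clifford relations to generators with Clifford
relations, adding a hyperbolic plane to the quadratic form. Over the bicomplex numbers it turns the
single generator `i` into the Minkowski generators `e₁, e₂, e₃`, and these into the ambient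
generators `E 1, …, E 5`, so the paravectors satisfy `F μ * F̄ ν + F ν * F̄ μ = 2 * g μ ν` and
likewise with the bars on the other factors. Hence `s μ ν` differs from `F μ * F̄ ν / 2` by a real
multiple of `1`, which drops out of commutators, and moving `F ρ * F̄ σ` through `F μ * F̄ ν` takes
four such exchanges, each of which contributes one term of the commutator.
-/

section CliffordFamily

variable {R A ι : Type*} [CommRing R] [Ring A] [Algebra R A]

/-- Orthogonal generators of a Clifford algebra, with the sign convention `(E i)² = -q i` natural
for paravectors: conjugation negates `E i`, so that `E i` has norm `E i * -(E i) = q i`. -/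
structure IsCliffordFamily (q : ι → R) (E : ι → A) : Prop where
  mul_self (i : ι) : E i * E i = -(q i • 1)
  mul_anticomm {i j : ι} (hij : i ≠ j) : E i * E j = -(E j * E i)

theorem IsCliffordFamily.mul_add_mul_swap [DecidableEq ι] {q : ι → R} {E : ι → A}
    (hE : IsCliffordFamily q E) (i j : ι) :
    E i * E j + E j * E i = -((2 * Matrix.diagonal q i j) • 1) := by
  obtain rfl | hij := eq_or_ne i j
  · rw [hE.mul_self, Matrix.diagonal_apply_eq]
    module
  · simp [hE.mul_anticomm hij, Matrix.diagonal_apply_ne _ hij]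

theorem IsCliffordFamily.append {m n : ℕ} {q : Fin m → R} {q' : Fin n → R} {E : Fin m → A}
    {E' : Fin n → A} (hE : IsCliffordFamily q E) (hE' : IsCliffordFamily q' E')
    (h : ∀ i j, E' j * E i = -(E i * E' j)) :
    IsCliffordFamily (Fin.append q q') (Fin.append E E') where
  mul_self i := by
    cases i using Fin.addCases with
    | left i => simpa only [Fin.append_left] using hE.mul_self i
    | right i => simpa only [Fin.append_right] using hE'.mul_self i
  mul_anticomm {i j} hij := by
    cases i using Fin.addCases with
    | left i =>
      cases j using Fin.addCases with
      | left j =>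
        simpa only [Fin.append_left] using hE.mul_anticomm (ne_of_apply_ne (Fin.castAdd n) hij)
      | right j => simp only [Fin.append_left, Fin.append_right, h, neg_neg]
    | right i =>
      cases j using Fin.addCases with
      | left j => simp only [Fin.append_left, Fin.append_right, h]
      | right j =>
        simpa only [Fin.append_right] using hE'.mul_anticomm (ne_of_apply_ne (Fin.natAdd m) hij)

theorem IsCliffordFamily.diag_neg {q : ι → R} {E : ι → A} (hE : IsCliffordFamily q E) :
    IsCliffordFamily q fun i ↦ !![E i, 0; 0, -E i] where
  mul_self i := by simp [Matrix.one_fin_two, hE.mul_self]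
  mul_anticomm hij := by simp [hE.mul_anticomm hij]

theorem isCliffordFamily_offDiag {c d : A} (hc : c * c = -1) (hd : d * d = -1)
    (hcd : Commute c d) :
    IsCliffordFamily (![1, -1] : Fin 2 → R) ![!![0, c; c, 0], !![0, d; -d, 0]] where
  mul_self i := by
    fin_cases i <;> simp [Matrix.one_fin_two, hc, hd]
  mul_anticomm {i j} hij := by
    fin_cases i <;> fin_cases j <;> simp [hcd.eq] at hij ⊢

theorem offDiag_mul_diag_neg {a b c : A} (hb : Commute b a) (hc : Commute c a) :
    !![0, b; c, 0] * !![a, 0; 0, -a] = -(!![a, 0; 0, -a] * !![0, b; c, 0]) := by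
  simp [hb.eq, hc.eq]

/-- The conformal compactification of the paravector model with generators `E`: the generators act
diagonally on `A × A`, and a hyperbolic plane is adjoined by means of two commuting square roots
`c` and `d` of `-1` that commute with all `E i`. -/
def conformalExtension {n : ℕ} (c d : A) (E : Fin n → A) :
    Fin (n + 2) → Matrix (Fin 2) (Fin 2) A :=
  Fin.append (fun i ↦ !![E i, 0; 0, -E i]) ![!![0, c; c, 0], !![0, d; -d, 0]]

theorem IsCliffordFamily.conformalExtension {n : ℕ} {q : Fin n → R} {E : Fin n → A} {c d : A}
    (hE : IsCliffordFamily q E) (hc : c * c = -1) (hd : d * d = -1) (hcd : Commute c d)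
    (hcE : ∀ i, Commute c (E i)) (hdE : ∀ i, Commute d (E i)) :
    IsCliffordFamily (Fin.append q ![1, -1]) (conformalExtension c d E) :=
  hE.diag_neg.append (isCliffordFamily_offDiag hc hd hcd) fun i j ↦ by
    fin_cases j
    · exact offDiag_mul_diag_neg (hcE i) (hcE i)
    · exact offDiag_mul_diag_neg (hdE i) (hdE i).neg_left

end CliffordFamily

section ParavectorPair

variable {R A ι : Type*} [CommRing R] [Ring A] [Algebra R A]

/-- Paravectors `F` and their conjugates `G` satisfying the Clifford relations of the metric `g`. -/
structure IsParavectorPair (g : ι → ι → R) (F G : ι → A) : Prop where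
  mul_bar_add_swap (a b : ι) : F a * G b + F b * G a = (2 * g a b) • 1
  bar_mul_add_swap (a b : ι) : G a * F b + G b * F a = (2 * g a b) • 1

theorem IsCliffordFamily.isParavectorPair {n : ℕ} {q : Fin n → R} {E : Fin n → A}
    (hE : IsCliffordFamily q E) :
    IsParavectorPair (Matrix.diagonal (Matrix.vecCons 1 q))
      (Matrix.vecCons 1 E) (Matrix.vecCons 1 (-E)) := by
  have diagonal_succ (i j : Fin n) :
      Matrix.diagonal (Matrix.vecCons 1 q) i.succ j.succ = Matrix.diagonal q i j := by
    simp [Matrix.diagonal_apply]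
  have neg_mul_add_swap (i j : Fin n) :
      -(E i * E j) + -(E j * E i) = (2 * Matrix.diagonal q i j) • (1 : A) := by
    rw [← neg_add, hE.mul_add_mul_swap, neg_neg]
  constructor <;> intro a b <;> cases a using Fin.cases <;> cases b using Fin.cases <;>
    simp [diagonal_succ, neg_mul_add_swap, Matrix.diagonal_apply_ne' _ (Fin.succ_ne_zero _),
      two_smul]

/-- The unnormalised spin angular momentum: four times the operator `s a b` of the physics
convention, so that no division is needed in the ring of scalars. -/
def biparavector (F G : ι → A) (a b : ι) : A := F a * G b - F b * G a

namespace IsParavectorPair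

variable {g : ι → ι → R} {F G : ι → A} (h : IsParavectorPair g F G)
include h

theorem mul_bar_swap (a b : ι) : F a * G b = (2 * g a b) • 1 - F b * G a :=
  eq_sub_of_add_eq (h.mul_bar_add_swap a b)

theorem biparavector_eq (a b : ι) :
    biparavector F G a b = (2 : R) • (F a * G b) - (2 * g a b) • 1 := by
  rw [biparavector, ← h.mul_bar_add_swap a b]
  module

theorem mul_bar_mul_mul_bar (a b c d : ι) :
    F a * G b * (F c * G d) = (2 * g b c) • (F a * G d) - F a * G c * (F b * G d) :=
  calc F a * G b * (F c * G d) = F a * (G b * F c) * G d := by simp only [mul_assoc]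
    _ = F a * ((2 * g b c) • 1 - G c * F b) * G d := by
      rw [eq_sub_of_add_eq (h.bar_mul_add_swap b c)]
    _ = (2 * g b c) • (F a * G d) - F a * G c * (F b * G d) := by
      simp only [mul_sub, sub_mul, mul_smul_comm, smul_mul_assoc, mul_one, mul_assoc]

theorem lie_mul_bar (m n r s : ι) :
    ⁅F m * G n, F r * G s⁆ =
      (2 * g n r) • (F m * G s) - (2 * g m r) • (F n * G s) +
        (2 * g n s) • (F r * G m) - (2 * g m s) • (F r * G n) := by
  have swap_nr := h.mul_bar_mul_mul_bar m n r s
  have swap_mr : F m * G r * (F n * G s) =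
      (2 * g m r) • (F n * G s) - F r * G m * (F n * G s) := by
    rw [h.mul_bar_swap m r, sub_mul, smul_one_mul]
  have swap_ns : F r * G m * (F n * G s) =
      (2 * g n s) • (F r * G m) - F r * G m * (F s * G n) := by
    rw [h.mul_bar_swap n s, mul_sub, mul_smul_one]
  have swap_ms := h.mul_bar_mul_mul_bar r m s n
  rw [Ring.lie_def, swap_nr, swap_mr, swap_ns, swap_ms]
  abel

theorem lie_biparavector_eq_four_smul_lie_mul_bar (m n r s : ι) :
    ⁅biparavector F G m n, biparavector F G r s⁆ = (4 : R) • ⁅F m * G n, F r * G s⁆ := by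
  simp only [Ring.lie_def, h.biparavector_eq, mul_sub, sub_mul, mul_smul_comm, smul_mul_assoc,
    mul_one, one_mul]
  module

theorem lie_biparavector (m n r s : ι) :
    ⁅biparavector F G m n, biparavector F G r s⁆ =
      (4 : R) • (g n r • biparavector F G m s - g m r • biparavector F G n s +
        g m s • biparavector F G n r - g n s • biparavector F G m r) := by
  rw [h.lie_biparavector_eq_four_smul_lie_mul_bar, h.lie_mul_bar,
    h.biparavector_eq m s, h.biparavector_eq n s]
  simp only [biparavector]
  rw [h.mul_bar_swap n r, h.mul_bar_swap m r]
  module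

end IsParavectorPair

end ParavectorPair

section AdS

theorem isCliffordFamily_bcI : IsCliffordFamily (![1] : Fin 1 → ℝ) ![bcI] where
  mul_self i := by simp [bcI_mul_self]
  mul_anticomm hij := (hij (Subsingleton.elim _ _)).elim

theorem conformalExtension_bcI :
    conformalExtension bcI bcJ ![bcI] = ![mink1, mink2, mink3] := by
  ext1 i; fin_cases i <;> rfl

theorem isCliffordFamily_mink :
    IsCliffordFamily (![1, 1, -1] : Fin 3 → ℝ) ![mink1, mink2, mink3] := by
  have hq : Fin.append ![1] ![1, -1] = (![1, 1, -1] : Fin 3 → ℝ) := by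
    ext i; fin_cases i <;> rfl
  rw [← conformalExtension_bcI, ← hq]
  exact isCliffordFamily_bcI.conformalExtension bcI_mul_self bcJ_mul_self (.all _ _)
    (fun _ ↦ .all _ _) (fun _ ↦ .all _ _)

theorem conformalExtension_mink :
    conformalExtension (bcI • 1) (bcJ • 1) ![mink1, mink2, mink3] =
      ![ads1, ads2, ads3, ads4, ads5] := by
  ext1 i; fin_cases i <;> rfl

theorem isCliffordFamily_ads :
    IsCliffordFamily (![1, 1, -1, 1, -1] : Fin 5 → ℝ) ![ads1, ads2, ads3, ads4, ads5] := by
  have hq : Fin.append ![1, 1, -1] ![1, -1] = (![1, 1, -1, 1, -1] : Fin 5 → ℝ) := by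
    ext i; fin_cases i <;> rfl
  have smul_one_commute (z : ℂ × ℂ) (X : Matrix (Fin 2) (Fin 2) (ℂ × ℂ)) : Commute (z • 1) X :=
    (Commute.one_left X).smul_left z
  rw [← conformalExtension_mink, ← hq]
  exact isCliffordFamily_mink.conformalExtension
    (by rw [smul_one_mul, smul_smul, bcI_mul_self, neg_one_smul])
    (by rw [smul_one_mul, smul_smul, bcJ_mul_self, neg_one_smul])
    (smul_one_commute _ _) (fun _ ↦ smul_one_commute _ _) (fun _ ↦ smul_one_commute _ _)

theorem isParavectorPair_ads : IsParavectorPair adsMetric adsPara adsParaBar := by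
  have hbar : adsParaBar = Matrix.vecCons 1 (-![ads1, ads2, ads3, ads4, ads5]) := by
    simp [adsParaBar]
  rw [hbar]
  exact isCliffordFamily_ads.isParavectorPair

end AdS

/-- the ambient spin angular momentum operators satisfy the
so(4,2)-type commutation relations
`[s μ ν, s ρ σ] = g ν ρ • s μ σ - g μ ρ • s ν σ + g μ σ • s ν ρ - g ν σ • s μ ρ`. -/
theorem adS_spin_so42_algebra :
    ∀ μ ν ρ σ : Fin 6,
      adsSpin μ ν * adsSpin ρ σ - adsSpin ρ σ * adsSpin μ ν =
        adsMetric ν ρ • adsSpin μ σ - adsMetric μ ρ • adsSpin ν σ +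
          adsMetric μ σ • adsSpin ν ρ - adsMetric ν σ • adsSpin μ ρ := by
  intro μ ν ρ σ
  have spin_eq (a b : Fin 6) :
      adsSpin a b = (1 / 4 : ℝ) • biparavector adsPara adsParaBar a b := rfl
  simp only [spin_eq, smul_mul_smul_comm]
  rw [← smul_sub, ← Ring.lie_def, isParavectorPair_ads.lie_biparavector]
  module
end
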